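/- Let y be a quasi shell solution and let C_u > 0 be a constant such that ϱ(r) ≤ C_u γ(r)^q/r⁴ and p(r) ≤ C_u γ(r)^{q+1}/r⁴ for all r ∈ [R₀, 2R₀] with γ(r) ≥ 0; set C_m = max{1, C_u, 4πC_u}. Then there exists ε > 0, depending only on k, ℓ, L₀ and C_u, such that if R₀ ≤ ε and 0 < δ ≤ R₀^{(q+3)/(q+1)}/(C_m 8^{1/(q+1)}), then γ′(r) ≥ 1/(2r) for all r ∈ [R₀, R₀ + δ]. -/

import Mathlib

open MeasureTheory Real Set Filter

/-- The constant `c_ℓ = 2π ∫₀¹ s^ℓ (1-s)^{-1/2} ds`. -/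
noncomputable def cConst (ℓ : ℝ) : ℝ :=
  2 * π * ∫ s in Set.Ioc (0 : ℝ) 1, s ^ ℓ / Real.sqrt (1 - s)

/-- Energy density of the massless Einstein--Vlasov ansatz. -/
noncomputable def rho (k ℓ L0 : ℝ) (y : ℝ → ℝ) (r : ℝ) : ℝ :=
  cConst ℓ * r ^ (2 * ℓ) *
    ∫ ε in Set.Ioc (Real.sqrt L0 / r) (Real.exp (y r)),
      (1 - ε * Real.exp (-(y r))) ^ k * ε ^ 2 * (ε ^ 2 - L0 / r ^ 2) ^ (ℓ + 1 / 2)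

/-- Radial pressure of the massless Einstein--Vlasov ansatz. -/
noncomputable def pres (k ℓ L0 : ℝ) (y : ℝ → ℝ) (r : ℝ) : ℝ :=
  (cConst ℓ / (2 * ℓ + 3)) * r ^ (2 * ℓ) *
    ∫ ε in Set.Ioc (Real.sqrt L0 / r) (Real.exp (y r)),
      (1 - ε * Real.exp (-(y r))) ^ k * (ε ^ 2 - L0 / r ^ 2) ^ (ℓ + 3 / 2)

/-- The Hawking mass `m(r) = 4π ∫₀ʳ s² ϱ(s) ds`. -/
noncomputable def hawkingMass (k ℓ L0 : ℝ) (y : ℝ → ℝ) (r : ℝ) : ℝ :=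
  4 * π * ∫ s in Set.Ioc (0 : ℝ) r, s ^ 2 * rho k ℓ L0 y s

/-- The characteristic function `γ(r) = y(r) - (1/2) ln (L₀ / r²)`. -/
noncomputable def charFn (L0 : ℝ) (y : ℝ → ℝ) (r : ℝ) : ℝ :=
  y r - (1 / 2) * Real.log (L0 / r ^ 2)

/-- The inner radius `R₀ = √L₀ e^{-y(0)}`. -/
noncomputable def innerRadius (L0 : ℝ) (y : ℝ → ℝ) : ℝ :=
  Real.sqrt L0 * Real.exp (-(y 0))

/-- A quasi shell solution of the massless Einstein--Vlasov system. -/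
def QuasiShell (k ℓ L0 : ℝ) (y : ℝ → ℝ) : Prop :=
  ContDiffOn ℝ 1 y (Set.Ici 0) ∧
  ∀ r > 0, 2 * hawkingMass k ℓ L0 y r / r < 1 ∧
    HasDerivAt y
      (-(1 - 2 * hawkingMass k ℓ L0 y r / r)⁻¹ *
        (4 * π * r * pres k ℓ L0 y r + hawkingMass k ℓ L0 y r / r ^ 2)) r

/-- `C_m = max{1, C_u, 4πC_u}`. -/
noncomputable def Cmax (Cu : ℝ) : ℝ := max 1 (max Cu (4 * π * Cu))

theorem cConst_nonneg (ℓ : ℝ) : 0 ≤ cConst ℓ := by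
  unfold cConst
  have : 0 ≤ ∫ s in Set.Ioc (0 : ℝ) 1, s ^ ℓ / Real.sqrt (1 - s) :=
    setIntegral_nonneg measurableSet_Ioc fun s hs =>
      div_nonneg (Real.rpow_nonneg hs.1.le _) (Real.sqrt_nonneg _)
  have := Real.pi_pos
  positivity

theorem base1_nonneg {e Y : ℝ} (h : e ≤ Real.exp Y) : 0 ≤ 1 - e * Real.exp (-Y) := by
  have : e * Real.exp (-Y) ≤ Real.exp Y * Real.exp (-Y) :=
    mul_le_mul_of_nonneg_right h (Real.exp_pos _).le
  rw [← Real.exp_add] at this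
  simp at this
  linarith

theorem base2_nonneg {e L0 r : ℝ} (hL : 0 < L0) (hr : 0 < r) (h : Real.sqrt L0 / r < e) :
    0 ≤ e ^ 2 - L0 / r ^ 2 := by
  have h0 : 0 ≤ Real.sqrt L0 / r := by positivity
  have h1 : (Real.sqrt L0 / r) ^ 2 ≤ e ^ 2 := by gcongr
  rw [div_pow, Real.sq_sqrt hL.le] at h1
  linarith

theorem rho_nonneg (k ℓ L0 : ℝ) (hL : 0 < L0) (y : ℝ → ℝ) {r : ℝ} (hr : 0 < r) :
    0 ≤ rho k ℓ L0 y r := by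
  unfold rho
  refine mul_nonneg (mul_nonneg (cConst_nonneg _) (Real.rpow_nonneg hr.le _)) ?_
  refine setIntegral_nonneg measurableSet_Ioc fun e he => ?_
  exact mul_nonneg (mul_nonneg (Real.rpow_nonneg (base1_nonneg he.2) _) (sq_nonneg _))
    (Real.rpow_nonneg (base2_nonneg hL hr he.1) _)

theorem pres_nonneg (k ℓ L0 : ℝ) (hl : -(1 / 2) ≤ ℓ) (hL : 0 < L0) (y : ℝ → ℝ) {r : ℝ}
    (hr : 0 < r) : 0 ≤ pres k ℓ L0 y r := by
  unfold pres
  refine mul_nonneg (mul_nonneg (div_nonneg (cConst_nonneg _) (by linarith))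
    (Real.rpow_nonneg hr.le _)) ?_
  refine setIntegral_nonneg measurableSet_Ioc fun e he => ?_
  exact mul_nonneg (Real.rpow_nonneg (base1_nonneg he.2) _)
    (Real.rpow_nonneg (base2_nonneg hL hr he.1) _)

theorem mass_nonneg (k ℓ L0 : ℝ) (hL : 0 < L0) (y : ℝ → ℝ) (r : ℝ) :
    0 ≤ hawkingMass k ℓ L0 y r := by
  unfold hawkingMass
  refine mul_nonneg (by have := Real.pi_pos; positivity) ?_
  exact setIntegral_nonneg measurableSet_Ioc fun s hs =>
    mul_nonneg (sq_nonneg _) (rho_nonneg k ℓ L0 hL y hs.1)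

theorem half_log_eq {L0 r : ℝ} (hL : 0 < L0) (hr : 0 < r) :
    (1 / 2) * Real.log (L0 / r ^ 2) = Real.log (Real.sqrt L0 / r) := by
  rw [Real.log_div hL.ne' (by positivity), Real.log_div (by positivity) hr.ne', Real.log_pow,
    Real.log_sqrt hL.le]
  push_cast
  ring

theorem Ioc_empty_of_charFn {L0 : ℝ} {y : ℝ → ℝ} {r : ℝ} (hL : 0 < L0) (hr : 0 < r)
    (h : charFn L0 y r ≤ 0) : Set.Ioc (Real.sqrt L0 / r) (Real.exp (y r)) = ∅ := by
  apply Set.Ioc_eq_empty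
  unfold charFn at h
  rw [half_log_eq hL hr] at h
  have h0 : 0 < Real.sqrt L0 / r := by positivity
  have : Real.exp (y r) ≤ Real.sqrt L0 / r := by
    rw [← Real.exp_log h0]
    exact Real.exp_le_exp.2 (by linarith)
  exact not_lt.2 this

theorem rho_zero (k ℓ : ℝ) {L0 : ℝ} {y : ℝ → ℝ} {r : ℝ} (hL : 0 < L0) (hr : 0 < r)
    (h : charFn L0 y r ≤ 0) : rho k ℓ L0 y r = 0 := by
  unfold rho
  rw [Ioc_empty_of_charFn hL hr h]; simp

theorem pres_zero (k ℓ : ℝ) {L0 : ℝ} {y : ℝ → ℝ} {r : ℝ} (hL : 0 < L0) (hr : 0 < r)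
    (h : charFn L0 y r ≤ 0) : pres k ℓ L0 y r = 0 := by
  unfold pres
  rw [Ioc_empty_of_charFn hL hr h]; simp

theorem quasi_le (k ℓ L0 : ℝ) (hl : -(1 / 2) ≤ ℓ) (hL : 0 < L0) {y : ℝ → ℝ}
    (hy : QuasiShell k ℓ L0 y) {r : ℝ} (hr : 0 < r) : y r ≤ y 0 := by
  have hanti : AntitoneOn y (Set.Ici 0) := by
    apply antitoneOn_of_deriv_nonpos (convex_Ici 0) hy.1.continuousOn
    · intro x hx
      rw [interior_Ici] at hx
      exact (hy.2 x hx).2.differentiableAt.differentiableWithinAt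
    · intro x hx
      rw [interior_Ici] at hx
      have hx0 : 0 < x := hx
      obtain ⟨h1, h2⟩ := hy.2 x hx
      rw [h2.deriv, neg_mul]
      have hp := pres_nonneg k ℓ L0 hl hL y hx0
      have hm := mass_nonneg k ℓ L0 hL y x
      have := Real.pi_pos
      have h3 : 0 ≤ (1 - 2 * hawkingMass k ℓ L0 y x / x)⁻¹ := inv_nonneg.2 (by linarith)
      have h4 : 0 ≤ 4 * π * x * pres k ℓ L0 y x + hawkingMass k ℓ L0 y x / x ^ 2 := by
        positivity
      exact neg_nonpos.2 (mul_nonneg h3 h4)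
  exact hanti (Set.mem_Ici.2 le_rfl) (Set.mem_Ici.2 hr.le) hr.le

theorem charFn_le (k ℓ L0 : ℝ) (hl : -(1 / 2) ≤ ℓ) (hL : 0 < L0) {y : ℝ → ℝ}
    (hy : QuasiShell k ℓ L0 y) {r : ℝ} (hr : 0 < r) :
    charFn L0 y r ≤ (r - innerRadius L0 y) / innerRadius L0 y := by
  have hR : 0 < innerRadius L0 y := by unfold innerRadius; positivity
  have h := quasi_le k ℓ L0 hl hL hy hr
  have hs : 0 < Real.sqrt L0 := Real.sqrt_pos.2 hL
  have hlog : Real.log (innerRadius L0 y) = Real.log (Real.sqrt L0) - y 0 := by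
    unfold innerRadius
    rw [Real.log_mul hs.ne' (Real.exp_pos _).ne', Real.log_exp]; ring
  have h1 := Real.log_le_sub_one_of_pos (div_pos hr hR)
  rw [Real.log_div hr.ne' hR.ne', hlog] at h1
  unfold charFn
  rw [half_log_eq hL hr, Real.log_div hs.ne' hr.ne', sub_div, div_self hR.ne']
  linarith

theorem x_pow_bound {q R Cu δ : ℝ} (hq : 1 ≤ q) (hR : 0 < R) (hδ : 0 < δ)
    (h : δ ≤ R ^ ((q + 3) / (q + 1)) / (Cmax Cu * 8 ^ (1 / (q + 1)))) :
    (δ / R) ^ (q + 1) ≤ R ^ 2 / (8 * Cmax Cu) := by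
  have hC : 1 ≤ Cmax Cu := le_max_left _ _
  have hC0 : 0 < Cmax Cu := by linarith
  have h8 : (0:ℝ) < 8 ^ (1 / (q + 1)) := by positivity
  have hq1 : q + 1 ≠ 0 := by linarith
  have h1 : δ ^ (q + 1) ≤ (R ^ ((q + 3) / (q + 1)) / (Cmax Cu * 8 ^ (1 / (q + 1)))) ^ (q + 1) :=
    Real.rpow_le_rpow hδ.le h (by linarith)
  rw [Real.div_rpow (by positivity) (by positivity), Real.mul_rpow hC0.le h8.le,
    ← Real.rpow_mul hR.le, ← Real.rpow_mul (by norm_num), div_mul_cancel₀ _ hq1,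
    div_mul_cancel₀ _ hq1, Real.rpow_one] at h1
  have h2 : Cmax Cu ≤ Cmax Cu ^ (q + 1) := by
    calc Cmax Cu = Cmax Cu ^ (1:ℝ) := (Real.rpow_one _).symm
      _ ≤ _ := Real.rpow_le_rpow_of_exponent_le hC (by linarith)
  have h3 : R ^ (q + 3) = R ^ (q + 1) * R ^ 2 := by
    rw [← Real.rpow_natCast R 2, ← Real.rpow_add hR]; congr 1; push_cast; ring
  rw [Real.div_rpow hδ.le hR.le, div_le_iff₀ (by positivity)]
  calc δ ^ (q + 1) ≤ R ^ (q + 3) / (Cmax Cu ^ (q + 1) * 8) := h1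
    _ ≤ R ^ (q + 3) / (Cmax Cu * 8) := by gcongr
    _ = _ := by rw [h3]; ring

theorem mass_bound (k ℓ L0 R r K : ℝ) (hL : 0 < L0) (y : ℝ → ℝ) (hR : 0 < R) (hRr : R ≤ r)
    (h0 : ∀ s, 0 < s → s ≤ R → rho k ℓ L0 y s = 0)
    (h1 : ∀ s, R < s → s ≤ r → s ^ 2 * rho k ℓ L0 y s ≤ K) :
    hawkingMass k ℓ L0 y r ≤ 4 * π * (K * (r - R)) := by
  unfold hawkingMass
  have hpi := Real.pi_pos
  refine mul_le_mul_of_nonneg_left ?_ (by positivity)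
  have hint : ∫ s in Set.Ioc (0:ℝ) r, (Set.Ioc R r).indicator (fun _ => K) s = K * (r - R) := by
    rw [setIntegral_indicator measurableSet_Ioc, Set.inter_eq_right.2 (Set.Ioc_subset_Ioc_left hR.le),
      setIntegral_const]
    simp [measureReal_def, hRr, mul_comm]
  rw [← hint]
  refine integral_mono_of_nonneg ?_ ?_ ?_
  · filter_upwards [ae_restrict_mem measurableSet_Ioc] with s hs
    exact mul_nonneg (sq_nonneg _) (rho_nonneg k ℓ L0 hL y hs.1)
  · refine Integrable.indicator ?_ measurableSet_Ioc
    exact integrable_const K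
  · filter_upwards [ae_restrict_mem measurableSet_Ioc] with s hs
    by_cases hsR : s ≤ R
    · rw [Set.indicator_of_notMem (fun h => absurd h.1 (not_lt.2 hsR)), h0 s hs.1 hsR, mul_zero]
    · rw [Set.indicator_of_mem (show s ∈ Set.Ioc R r from ⟨not_le.1 hsR, hs.2⟩)]
      exact h1 s (not_le.1 hsR) hs.2

theorem final_bound {m p r : ℝ} (hr : 0 < r) (hm0 : 0 ≤ m) (hp0 : 0 ≤ p)
    (hm : m ≤ r / 8) (hp : 4 * π * r * p ≤ 1 / (8 * r)) :
    1 / (2 * r) ≤ -(1 - 2 * m / r)⁻¹ * (4 * π * r * p + m / r ^ 2) + 1 / r := by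
  have hpi := Real.pi_pos
  have h1 : 2 * m / r ≤ 1 / 4 := by rw [div_le_iff₀ hr]; linarith
  have h2 : (1 - 2 * m / r)⁻¹ ≤ 4 / 3 := by
    rw [inv_le_comm₀ (by linarith) (by norm_num)]; norm_num; linarith
  have h3 : m / r ^ 2 ≤ 1 / (8 * r) := by
    rw [div_le_div_iff₀ (by positivity) (by positivity)]; nlinarith
  have h4 : 0 ≤ 4 * π * r * p + m / r ^ 2 := by positivity
  have h5 : (1 - 2 * m / r)⁻¹ * (4 * π * r * p + m / r ^ 2) ≤ 4 / 3 * (1 / (8 * r) + 1 / (8 * r)) :=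
    mul_le_mul h2 (by linarith) h4 (by norm_num)
  have e1 : 1 / (8 * r) = (1 / r) / 8 := by field_simp
  have e2 : 1 / (2 * r) = (1 / r) / 2 := by field_simp
  have : 0 < 1 / r := by positivity
  rw [e1] at h5
  rw [e2]
  linarith

/-- `γ'(r) ≥ 1/(2r)` on `[R₀, R₀+δ]` for `δ ≤ R₀^{(q+3)/(q+1)}/(C_m 8^{1/(q+1)})`
and `R₀` small, given the upper matter bounds. -/
theorem charFn_deriv_lower_bound (k ℓ L0 Cu : ℝ)
    (hk : 0 ≤ k) (hl : -(1 / 2) ≤ ℓ) (hL : 0 < L0) (hCu : 0 < Cu) :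
    ∃ ε : ℝ, 0 < ε ∧
      ∀ y : ℝ → ℝ, QuasiShell k ℓ L0 y →
        (∀ r, innerRadius L0 y ≤ r → r ≤ 2 * innerRadius L0 y →
          0 ≤ charFn L0 y r →
          rho k ℓ L0 y r ≤ Cu * charFn L0 y r ^ (k + ℓ + 3 / 2) / r ^ 4 ∧
          pres k ℓ L0 y r ≤ Cu * charFn L0 y r ^ (k + ℓ + 3 / 2 + 1) / r ^ 4) →
        innerRadius L0 y ≤ ε →
        ∀ δ : ℝ, 0 < δ →
          δ ≤ innerRadius L0 y ^ ((k + ℓ + 3 / 2 + 3) / (k + ℓ + 3 / 2 + 1)) /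
              (Cmax Cu * 8 ^ (1 / (k + ℓ + 3 / 2 + 1))) →
          ∀ r, innerRadius L0 y ≤ r → r ≤ innerRadius L0 y + δ →
            1 / (2 * r) ≤ deriv (charFn L0 y) r := by
  refine ⟨1, one_pos, ?_⟩
  intro y hy hb hR1 δ hδ hδle r hr1 hr2
  set q := k + ℓ + 3 / 2 with hq
  have hq1 : 1 ≤ q := by linarith
  have hR : 0 < innerRadius L0 y := by unfold innerRadius; positivity
  have hcf := fun {s : ℝ} (hs : 0 < s) => charFn_le k ℓ L0 hl hL hy hs
  generalize innerRadius L0 y = R at *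
  have hr : 0 < r := by linarith
  have hpi := Real.pi_pos
  have hC1 : 1 ≤ Cmax Cu := le_max_left _ _
  have hC4 : 4 * π * Cu ≤ Cmax Cu := (le_max_right _ _).trans (le_max_right _ _)
  have hX := x_pow_bound hq1 hR hδ hδle
  set x := δ / R with hx
  have hx0 : 0 < x := by positivity
  have hXC : 4 * π * Cu * x ^ (q + 1) ≤ R ^ 2 / 8 := by
    calc 4 * π * Cu * x ^ (q + 1) ≤ Cmax Cu * (R ^ 2 / (8 * Cmax Cu)) :=
          mul_le_mul hC4 hX (by positivity) (by linarith)
      _ = R ^ 2 / 8 := by field_simp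
  have hx1 : x ≤ 1 := by
    by_contra hcon
    have h1 : 1 < x ^ (q + 1) := Real.one_lt_rpow (not_le.1 hcon) (by linarith)
    have h2 : R ^ 2 / (8 * Cmax Cu) ≤ 1 := by
      rw [div_le_one (by positivity)]; nlinarith
    linarith
  have hδR : δ ≤ R := by rwa [hx, div_le_one hR] at hx1
  have hδx : δ = x * R := by rw [hx]; field_simp
  have hg : ∀ s, R ≤ s → s ≤ r → charFn L0 y s ≤ x := fun s h1 h2 =>
    (hcf (by linarith)).trans (div_le_div_of_nonneg_right (by linarith) hR.le)
  have hmass : hawkingMass k ℓ L0 y r ≤ R / 8 := by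
    have hm := mass_bound k ℓ L0 R r (Cu * x ^ q / R ^ 2) hL y hR hr1
      (fun s hs hsR => rho_zero k ℓ hL hs
        ((hcf hs).trans (div_nonpos_of_nonpos_of_nonneg (by linarith) hR.le)))
      (fun s hs hsr => by
        have hs0 : 0 < s := by linarith
        rcases le_total (charFn L0 y s) 0 with hc | hc
        · rw [rho_zero k ℓ hL hs0 hc, mul_zero]; positivity
        · have h1 := (hb s hs.le (by linarith) hc).1
          have h2 : charFn L0 y s ^ q ≤ x ^ q :=
            Real.rpow_le_rpow hc (hg s hs.le hsr) (by linarith)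
          calc s ^ 2 * rho k ℓ L0 y s ≤ s ^ 2 * (Cu * charFn L0 y s ^ q / s ^ 4) := by gcongr
            _ = Cu * charFn L0 y s ^ q / s ^ 2 := by field_simp
            _ ≤ Cu * x ^ q / R ^ 2 := by gcongr)
    calc hawkingMass k ℓ L0 y r ≤ 4 * π * (Cu * x ^ q / R ^ 2 * (r - R)) := hm
      _ ≤ 4 * π * (Cu * x ^ q / R ^ 2 * (x * R)) := by gcongr; linarith
      _ = 4 * π * Cu * x ^ (q + 1) / R := by
        rw [Real.rpow_add hx0 q 1, Real.rpow_one]; field_simp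
      _ ≤ R ^ 2 / 8 / R := by gcongr
      _ = R / 8 := by field_simp
  have hpres : 4 * π * r * pres k ℓ L0 y r ≤ 1 / (8 * r) := by
    rcases le_total (charFn L0 y r) 0 with hc | hc
    · rw [pres_zero k ℓ hL hr hc, mul_zero]; positivity
    · have h1 := (hb r hr1 (by linarith) hc).2
      have h2 : charFn L0 y r ^ (q + 1) ≤ x ^ (q + 1) :=
        Real.rpow_le_rpow hc (hg r hr1 le_rfl) (by linarith)
      calc 4 * π * r * pres k ℓ L0 y r
          ≤ 4 * π * r * (Cu * charFn L0 y r ^ (q + 1) / r ^ 4) := by gcongr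
        _ ≤ 4 * π * r * (Cu * x ^ (q + 1) / r ^ 4) := by gcongr
        _ = 4 * π * Cu * x ^ (q + 1) / r ^ 3 := by field_simp
        _ ≤ r ^ 2 / 8 / r ^ 3 := by
          gcongr
          exact hXC.trans (by gcongr)
        _ = 1 / (8 * r) := by field_simp
  have hd : HasDerivAt (charFn L0 y)
      (-(1 - 2 * hawkingMass k ℓ L0 y r / r)⁻¹ *
        (4 * π * r * pres k ℓ L0 y r + hawkingMass k ℓ L0 y r / r ^ 2) + 1 / r) r := by
    have h1 := (hy.2 r hr).2
    have h2 := (Real.hasDerivAt_log hr.ne').sub_const (Real.log (Real.sqrt L0))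
    have h3 := h1.add h2
    rw [← one_div r] at h3
    refine h3.congr_of_eventuallyEq ?_
    filter_upwards [lt_mem_nhds hr] with s hs
    unfold charFn
    rw [half_log_eq hL hs, Real.log_div (Real.sqrt_pos.2 hL).ne' hs.ne']
    simp only [Pi.add_apply]
    ring
  rw [hd.deriv]
  exact final_bound hr (mass_nonneg k ℓ L0 hL y r) (pres_nonneg k ℓ L0 hl hL y hr)
    (by linarith) hpres
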